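/- Let n ∈ ℕ, 0 < p < r < 1, and f : {0,1}^n → ℝ. Then Var_r(E_{p/r}[f(ψ·ξ) | ψ]) = Σ_{S ⊆ {1,…,n}, S ≠ ∅} ((p/r)·((1−r)/(1−p)))^{|S|} · f̂^p(S)². -/

import Mathlib

/-!
Both sides are quadratic forms in `f`, so it suffices to compare their kernels, and both kernels
are products over the coordinates.

Integrating out `ξ` gives `condExp p r f ψ = ∑ ω, (∏ i, trans (p / r) (ψ i) (ω i)) * f ω`, where
`trans s c a` is the probability that a bit `c`, kept with probability `s`, becomes `a`
(`condExp_eq_sum_trans`). Hence the second moment of `condExp p r f` under `ℙ_r` has kernel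
`∏ i, ∑ c, bit r c * trans (p / r) c (ω i) * trans (p / r) c (ω' i)`. On the other side,
expanding the squares and using `∑ S, ∏ i ∈ S, x i = ∏ i, (1 + x i)`, the sum over all `S` has kernel
`∏ i, bit p (ω i) * bit p (ω' i) * (1 + l * chiBit p (ω i) * chiBit p (ω' i))` with
`l = (p / r) * ((1 - r) / (1 - p))`. The factors agree by a check of the four values of a pair of
bits (`bit_kernel`). The term `S = ∅` is the squared mean, since `ψ·ξ` has law `ℙ_p`.
-/

open Finset Filter

namespace PartialObs

/-- Weight of a configuration `ω ∈ {0,1}^n` under the product measure `ℙ_p`. -/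
noncomputable def w {n : ℕ} (p : ℝ) (ω : Fin n → Bool) : ℝ :=
  ∏ i, if ω i then p else 1 - p

/-- Expectation with respect to `ℙ_p`. -/
noncomputable def E {n : ℕ} (p : ℝ) (f : (Fin n → Bool) → ℝ) : ℝ :=
  ∑ ω : Fin n → Bool, w p ω * f ω

/-- Variance with respect to `ℙ_p`. -/
noncomputable def Var {n : ℕ} (p : ℝ) (f : (Fin n → Bool) → ℝ) : ℝ :=
  E p (fun ω => (f ω - E p f) ^ 2)

/-- Coordinatewise product `ψ·ξ` of two configurations. -/
def prodCfg {n : ℕ} (ψ ξ : Fin n → Bool) : Fin n → Bool := fun i => ψ i && ξ i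

/-- The conditional expectation `E_{p/r}[f(ψ·ξ) | ψ]`, as a function of `ψ`:
`ξ` is integrated out according to `ℙ_{p/r}`. -/
noncomputable def condExp {n : ℕ} (p r : ℝ) (f : (Fin n → Bool) → ℝ)
    (ψ : Fin n → Bool) : ℝ :=
  E (p / r) (fun ξ => f (prodCfg ψ ξ))

/-- The character `χ_S^p(ω) = ∏_{i ∈ S} χ_i^p(ω)`, where `χ_i^p(ω) = -√((1-p)/p)`
if `ω_i = 1` and `√(p/(1-p))` if `ω_i = 0`. -/
noncomputable def chi {n : ℕ} (p : ℝ) (S : Finset (Fin n)) (ω : Fin n → Bool) : ℝ :=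
  ∏ i ∈ S, if ω i then -Real.sqrt ((1 - p) / p) else Real.sqrt (p / (1 - p))

/-- The Fourier coefficient `f̂^p(S) = E_p[f · χ_S^p]`. -/
noncomputable def fourier {n : ℕ} (p : ℝ) (f : (Fin n → Bool) → ℝ)
    (S : Finset (Fin n)) : ℝ :=
  E p (fun ω => f ω * chi p S ω)

/-- The Bernoulli weight of a single bit. -/
noncomputable def bit (p : ℝ) (a : Bool) : ℝ := if a then p else 1 - p

/-- The one-coordinate character `χ_i^p` as a function of the bit `ω_i`. -/
noncomputable def chiBit (p : ℝ) (a : Bool) : ℝ :=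
  if a then -Real.sqrt ((1 - p) / p) else Real.sqrt (p / (1 - p))

/-- The probability that `c && d = a` when the bit `d` equals `1` with probability `s`. -/
noncomputable def trans (s : ℝ) (c a : Bool) : ℝ :=
  ∑ d : Bool, bit s d * if (c && d) = a then 1 else 0

lemma sum_prod_bool {n : ℕ} (g : Fin n → Bool → ℝ) :
    ∑ ω : Fin n → Bool, ∏ i, g i (ω i) = ∏ i, ∑ a : Bool, g i a := by
  rw [Finset.prod_univ_sum, Fintype.piFinset_univ]

lemma w_eq {n : ℕ} (p : ℝ) (ω : Fin n → Bool) : w p ω = ∏ i, bit p (ω i) := rfl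

lemma condExp_eq_sum_trans {n : ℕ} (p r : ℝ) (f : (Fin n → Bool) → ℝ) (ψ : Fin n → Bool) :
    condExp p r f ψ = ∑ ω, (∏ i, trans (p / r) (ψ i) (ω i)) * f ω := by
  have h : ∀ ω : Fin n → Bool, ∏ i, trans (p / r) (ψ i) (ω i)
      = ∑ ξ : Fin n → Bool, w (p / r) ξ * if prodCfg ψ ξ = ω then 1 else 0 := by
    intro ω
    simp only [trans]
    rw [← sum_prod_bool (fun i d => bit (p / r) d * if (ψ i && d) = ω i then 1 else 0)]
    refine Finset.sum_congr rfl fun ξ _ => ?_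
    rw [Finset.prod_mul_distrib, Finset.prod_boole, w_eq]
    simp [prodCfg, funext_iff]
  simp only [h, Finset.sum_mul]
  rw [Finset.sum_comm]
  simp only [condExp, E]
  refine Finset.sum_congr rfl fun ξ _ => ?_
  simp

/-- A bit of density `r` thinned by `p / r` has density `p`. -/
lemma bit_mean {p r : ℝ} (hr : r ≠ 0) (a : Bool) :
    ∑ c : Bool, bit r c * trans (p / r) c a = bit p a := by
  cases a <;> simp [bit, trans] <;> (field_simp; try ring)

/-- The joint law of two independent thinnings of the same bit of density `r`, expressed through
the characters. -/
lemma bit_kernel {p r : ℝ} (hp : 0 < p) (hp1 : p < 1) (hr : r ≠ 0) (a b : Bool) :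
    ∑ c : Bool, bit r c * trans (p / r) c a * trans (p / r) c b
      = bit p a * bit p b * (1 + p / r * ((1 - r) / (1 - p)) * (chiBit p a * chiBit p b)) := by
  have hq : 0 < 1 - p := sub_pos.2 hp1
  have h11 : Real.sqrt ((1 - p) / p) * Real.sqrt ((1 - p) / p) = (1 - p) / p :=
    Real.mul_self_sqrt (by positivity)
  have h00 : Real.sqrt (p / (1 - p)) * Real.sqrt (p / (1 - p)) = p / (1 - p) :=
    Real.mul_self_sqrt (by positivity)
  have h10 : Real.sqrt ((1 - p) / p) * Real.sqrt (p / (1 - p)) = 1 := by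
    rw [← Real.sqrt_mul (by positivity)]
    rw [div_mul_div_cancel₀ hp.ne', div_self hq.ne', Real.sqrt_one]
  have h01 : Real.sqrt (p / (1 - p)) * Real.sqrt ((1 - p) / p) = 1 := by rw [mul_comm, h10]
  cases a <;> cases b <;>
    simp only [bit, trans, chiBit, Fintype.sum_bool, neg_mul, mul_neg, neg_neg, if_true,
      Bool.false_eq_true, if_false, h00, h01, h10, h11] <;> simp <;> field_simp <;> ring

lemma mean_condExp {n : ℕ} {p r : ℝ} (hr : r ≠ 0) (f : (Fin n → Bool) → ℝ) :
    E r (condExp p r f) = E p f := by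
  simp only [E, condExp_eq_sum_trans, Finset.mul_sum]
  rw [Finset.sum_comm]
  refine Finset.sum_congr rfl fun ω _ => ?_
  simp only [← mul_assoc, ← Finset.sum_mul, w_eq, ← Finset.prod_mul_distrib]
  rw [sum_prod_bool (fun i c => bit r c * trans (p / r) c (ω i))]
  simp only [bit_mean hr]

lemma second_moment_condExp {n : ℕ} (p r : ℝ) (f : (Fin n → Bool) → ℝ) :
    E r (fun ψ => condExp p r f ψ ^ 2)
      = ∑ ω, ∑ ω', (∏ i, ∑ c : Bool, bit r c * trans (p / r) c (ω i) * trans (p / r) c (ω' i))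
          * (f ω * f ω') := by
  simp only [E, condExp_eq_sum_trans, sq, Finset.sum_mul_sum]
  simp only [Finset.mul_sum]
  rw [Finset.sum_comm]
  refine Finset.sum_congr rfl fun ω _ => ?_
  rw [Finset.sum_comm]
  refine Finset.sum_congr rfl fun ω' _ => ?_
  rw [← sum_prod_bool (fun i c => bit r c * trans (p / r) c (ω i) * trans (p / r) c (ω' i)),
    Finset.sum_mul]
  refine Finset.sum_congr rfl fun ψ _ => ?_
  rw [Finset.prod_mul_distrib, Finset.prod_mul_distrib, w_eq]
  ring

lemma sum_fourier_sq {n : ℕ} (p l : ℝ) (f : (Fin n → Bool) → ℝ) :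
    ∑ S : Finset (Fin n), l ^ S.card * fourier p f S ^ 2
      = ∑ ω, ∑ ω', (∏ i, bit p (ω i) * bit p (ω' i)
          * (1 + l * (chiBit p (ω i) * chiBit p (ω' i)))) * (f ω * f ω') := by
  simp only [fourier, E, sq, Finset.sum_mul_sum]
  simp only [Finset.mul_sum]
  rw [Finset.sum_comm]
  refine Finset.sum_congr rfl fun ω _ => ?_
  rw [Finset.sum_comm]
  refine Finset.sum_congr rfl fun ω' _ => ?_
  rw [Finset.prod_mul_distrib, Finset.prod_mul_distrib, Finset.prod_one_add, Finset.powerset_univ,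
    Finset.mul_sum, Finset.sum_mul]
  refine Finset.sum_congr rfl fun S _ => ?_
  have hchi : ∀ ω : Fin n → Bool, chi p S ω = ∏ i ∈ S, chiBit p (ω i) := fun _ => rfl
  rw [Finset.prod_mul_distrib, Finset.prod_mul_distrib, Finset.prod_const, w_eq, w_eq, hchi, hchi]
  ring

lemma sum_w {n : ℕ} (p : ℝ) : ∑ ω : Fin n → Bool, w p ω = 1 := by
  simp only [w_eq]
  rw [sum_prod_bool (fun _ a => bit p a)]
  simp [bit]

lemma var_eq {n : ℕ} (p : ℝ) (g : (Fin n → Bool) → ℝ) :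
    Var p g = E p (fun ω => g ω ^ 2) - E p g ^ 2 := by
  have h : ∀ m : ℝ, E p (fun ω => (g ω - m) ^ 2)
      = E p (fun ω => g ω ^ 2) - 2 * m * E p g + m ^ 2 := by
    intro m
    have h1 : m ^ 2 = ∑ ω : Fin n → Bool, w p ω * m ^ 2 := by
      rw [← Finset.sum_mul, sum_w, one_mul]
    rw [h1]
    simp only [E]
    rw [Finset.mul_sum, ← Finset.sum_sub_distrib, ← Finset.sum_add_distrib]
    exact Finset.sum_congr rfl fun ω _ => by ring
  rw [Var, h]
  ring

/-- `Var_r(E_{p/r}[f(ψ·ξ) | ψ]) = Σ_{S ≠ ∅} ((p/r)·((1−r)/(1−p)))^{|S|} f̂^p(S)²`. -/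
theorem two_scale_variance_formula {n : ℕ} (p r : ℝ)
    (hp : 0 < p) (hpr : p < r) (hr : r < 1)
    (f : (Fin n → Bool) → ℝ) :
    Var r (condExp p r f)
      = ∑ S ∈ Finset.univ.filter (fun S : Finset (Fin n) => S ≠ ∅),
          (p / r * ((1 - r) / (1 - p))) ^ S.card * fourier p f S ^ 2 := by
  have hr0 : r ≠ 0 := (hp.trans hpr).ne'
  have hempty : fourier p f ∅ = E p f := by simp [fourier, chi]
  rw [var_eq, mean_condExp hr0, second_moment_condExp]
  simp only [bit_kernel hp (hpr.trans hr) hr0]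
  rw [← sum_fourier_sq, Finset.filter_ne', ← Finset.add_sum_erase _ _ (Finset.mem_univ ∅), hempty]
  simp

end PartialObs
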